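/- arXiv:2011.01501 — 2 statements merged into one kernel-verified Lean document; each statement's English description precedes it below -/
import Mathlib

section
/- The ilr transformation preserves the inner product: for D ≥ 2, define ilr : S^D → ℝ^{D−1} by ilr(x)_i := (x, e_i)_S, where e_i := C(exp(w_i)) with (w_i)_k = 1/√(i(i+1)) for k ≤ i, (w_i)_{i+1} = −√(i/(i+1)), and (w_i)_k = 0 for k > i+1. Then for all x, y ∈ S^D, the Euclidean inner product ⟨ilr(x), ilr(y)⟩ in ℝ^{D−1} equals the Aitchison inner product (x, y)_S. -/
open Finset

noncomputable section

/-- Membership in the D-part simplex: strictly positive entries summing to 1. -/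
def inSimplex {D : ℕ} (x : Fin D → ℝ) : Prop :=
  (∀ i, 0 < x i) ∧ ∑ i, x i = 1

/-- Closure operation: divide each entry by the total sum. -/
def clo {D : ℕ} (z : Fin D → ℝ) : Fin D → ℝ :=
  fun i => z i / ∑ j, z j

/-- Perturbation `x ⊕ y`. -/
def pert {D : ℕ} (x y : Fin D → ℝ) : Fin D → ℝ :=
  clo (fun i => x i * y i)

/-- Inverse perturbation `x ⊖ y`. -/
def ipert {D : ℕ} (x y : Fin D → ℝ) : Fin D → ℝ :=
  clo (fun i => x i / y i)

/-- Power transformation `a ⊗ x` (componentwise real power, then closure). -/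
def apow {D : ℕ} (a : ℝ) (x : Fin D → ℝ) : Fin D → ℝ :=
  clo (fun i => x i ^ a)

/-- Geometric mean of the components. -/
def gmean {D : ℕ} (x : Fin D → ℝ) : ℝ :=
  (∏ i, x i) ^ ((1 : ℝ) / D)

/-- Aitchison inner product `(x, y)_S`. -/
def aInner {D : ℕ} (x y : Fin D → ℝ) : ℝ :=
  ∑ i, Real.log (x i / gmean x) * Real.log (y i / gmean y)

/-- Aitchison norm `‖x‖_S`. -/
def aNorm {D : ℕ} (x : Fin D → ℝ) : ℝ :=
  Real.sqrt (aInner x x)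

/-- The uniform (neutral) composition (1/D, …, 1/D). -/
def unif (D : ℕ) : Fin D → ℝ := fun _ => 1 / (D : ℝ)

/-- The clr-coordinates `w i` of the i-th standard ilr basis composition
    (components indexed by `Fin D`, corresponding to 1-based components 1..D):
    entry `1/√(i(i+1))` in the first i components, `-√(i/(i+1))` in component i+1,
    and 0 afterwards. -/
def w (D i : ℕ) : Fin D → ℝ := fun k =>
  if (k : ℕ) < i then 1 / Real.sqrt ((i : ℝ) * ((i : ℝ) + 1))
  else if (k : ℕ) = i then - Real.sqrt ((i : ℝ) / ((i : ℝ) + 1))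
  else 0

/-- The i-th standard ilr basis composition `e i := C(exp (w i))`. -/
def e (D i : ℕ) : Fin D → ℝ := clo (fun k => Real.exp (w D i k))

/-- The ilr transformation: `ilr(x)_i = (x, e_i)_S` for i = 1, …, D-1
    (here `i : Fin (D-1)` corresponds to the 1-based index `i+1`). -/
def ilr {D : ℕ} (x : Fin D → ℝ) : Fin (D - 1) → ℝ :=
  fun i => aInner x (e D ((i : ℕ) + 1))

lemma log_clr {D : ℕ} (x : Fin D → ℝ) (hx : ∀ i, 0 < x i) (i : Fin D) :
    Real.log (x i / gmean x) = Real.log (x i) - (1 / (D : ℝ)) * ∑ j, Real.log (x j) := by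
  have hp : 0 < ∏ j, x j := Finset.prod_pos (fun j _ => hx j)
  have hg : 0 < gmean x := Real.rpow_pos_of_pos hp _
  rw [Real.log_div (hx i).ne' hg.ne', gmean, Real.log_rpow hp,
    Real.log_prod (fun j _ => (hx j).ne')]

lemma sum_clr {D : ℕ} (hD : 2 ≤ D) (x : Fin D → ℝ) (hx : ∀ i, 0 < x i) :
    ∑ i, Real.log (x i / gmean x) = 0 := by
  have h : (D : ℝ) ≠ 0 := by positivity
  simp only [log_clr x hx, Finset.sum_sub_distrib, Finset.sum_const, Finset.card_univ,
    Fintype.card_fin, nsmul_eq_mul]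
  field_simp
  ring

lemma sum_w (D i : ℕ) (hi : 1 ≤ i) (hD : i < D) (A : ℕ → ℝ) :
    ∑ k : Fin D, A k * w D i k
      = (∑ k ∈ Finset.range i, A k - i * A i) / Real.sqrt ((i : ℝ) * ((i : ℝ) + 1)) := by
  have hi0 : (0 : ℝ) < i := by exact_mod_cast hi
  have h1 : Real.sqrt ((i : ℝ) / ((i : ℝ) + 1)) = i / Real.sqrt ((i : ℝ) * ((i : ℝ) + 1)) := by
    rw [Real.sqrt_div hi0.le, Real.sqrt_mul hi0.le]
    have := Real.mul_self_sqrt hi0.le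
    have h2 : 0 < Real.sqrt (i : ℝ) := Real.sqrt_pos.2 hi0
    have h3 : 0 < Real.sqrt ((i : ℝ) + 1) := Real.sqrt_pos.2 (by linarith)
    field_simp
    nlinarith
  unfold w
  rw [h1]
  rw [Fin.sum_univ_eq_sum_range (fun k : ℕ => A k * (if k < i then 1 / Real.sqrt ((i : ℝ) * ((i : ℝ) + 1))
    else if k = i then - (i / Real.sqrt ((i : ℝ) * ((i : ℝ) + 1))) else 0)) D]
  rw [← Finset.sum_subset (Finset.range_mono (show i + 1 ≤ D from hD))]
  · rw [Finset.sum_range_succ, Finset.sum_congr rfl (g := fun k => A k * (1 / Real.sqrt ((i : ℝ) * ((i : ℝ) + 1))))]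
    · rw [← Finset.sum_mul]
      simp only [lt_irrefl, if_false, if_true]
      ring
    · intro k hk
      rw [if_pos (Finset.mem_range.1 hk)]
  · intro k _ hk
    rw [Finset.mem_range] at hk
    rw [if_neg (by omega), if_neg (by omega), mul_zero]

lemma clr_e (D i : ℕ) (hi : 1 ≤ i) (hD : i < D) (k : Fin D) :
    Real.log (e D i k / gmean (e D i)) = w D i k := by
  have h0 : ∑ k : Fin D, w D i k = 0 := by
    have := sum_w D i hi hD (fun _ => 1)
    simpa using this
  have hne : (Finset.univ : Finset (Fin D)).Nonempty := ⟨k, Finset.mem_univ k⟩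
  have hZ : 0 < ∑ j, Real.exp (w D i j) := Finset.sum_pos (fun j _ => Real.exp_pos _) hne
  have hpos : ∀ j, 0 < e D i j := fun j => div_pos (Real.exp_pos _) hZ
  have hl : ∀ j, Real.log (e D i j) = w D i j - Real.log (∑ j, Real.exp (w D i j)) := by
    intro j
    unfold e clo
    rw [Real.log_div (Real.exp_pos _).ne' hZ.ne', Real.log_exp]
  have h : (D : ℝ) ≠ 0 := by
    have : 0 < D := by omega
    positivity
  rw [log_clr _ hpos]
  simp only [hl, Finset.sum_sub_distrib, h0, Finset.sum_const, Finset.card_univ,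
    Fintype.card_fin, nsmul_eq_mul]
  field_simp
  ring

lemma helmert (A B : ℕ → ℝ) (n : ℕ) :
    ∑ i ∈ Finset.range n,
      ((∑ k ∈ Finset.range (i+1), A k - (i+1 : ℕ) * A (i+1)) / Real.sqrt (((i+1 : ℕ) : ℝ) * (((i+1 : ℕ) : ℝ) + 1))) *
      ((∑ k ∈ Finset.range (i+1), B k - (i+1 : ℕ) * B (i+1)) / Real.sqrt (((i+1 : ℕ) : ℝ) * (((i+1 : ℕ) : ℝ) + 1)))
    = ∑ k ∈ Finset.range (n+1), A k * B k
      - (∑ k ∈ Finset.range (n+1), A k) * (∑ k ∈ Finset.range (n+1), B k) / ((n : ℝ) + 1) := by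
  induction n with
  | zero => simp
  | succ n ih =>
    rw [Finset.sum_range_succ, ih, div_mul_div_comm, Real.mul_self_sqrt (by positivity),
      Finset.sum_range_succ _ (n+1), Finset.sum_range_succ A (n+1), Finset.sum_range_succ B (n+1)]
    generalize ∑ k ∈ Finset.range (n+1), A k = S
    generalize ∑ k ∈ Finset.range (n+1), B k = T
    push_cast
    have : (n : ℝ) + 1 ≠ 0 := by positivity
    have : (n : ℝ) + 1 + 1 ≠ 0 := by positivity
    field_simp
    ring

/-- the ilr transformation preserves the inner product:
    the Euclidean inner product of the ilr coordinates equals the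
    Aitchison inner product. -/
theorem ilr_preserves_inner (D : ℕ) (hD : 2 ≤ D) (x y : Fin D → ℝ)
    (hx : inSimplex x) (hy : inSimplex y) :
    ∑ i, ilr x i * ilr y i = aInner x y := by
  obtain ⟨n, rfl⟩ : ∃ n, D = n + 1 := ⟨D - 1, by omega⟩
  have key : ∀ a : Fin (n+1) → ℝ, ∃ A : ℕ → ℝ, ∀ k : Fin (n+1), A k = a k := fun a =>
    ⟨fun k => if h : k < n + 1 then a ⟨k, h⟩ else 0, fun k => dif_pos k.2⟩
  obtain ⟨A, hA⟩ := key (fun k => Real.log (x k / gmean x))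
  obtain ⟨B, hB⟩ := key (fun k => Real.log (y k / gmean y))
  have hA0 : ∑ k ∈ Finset.range (n+1), A k = 0 := by
    rw [← Fin.sum_univ_eq_sum_range, Finset.sum_congr rfl (fun k _ => hA k)]
    exact sum_clr hD x hx.1
  have hilr : ∀ (z : Fin (n+1) → ℝ) (C : ℕ → ℝ),
      (∀ k : Fin (n+1), C k = Real.log (z k / gmean z)) → ∀ i : Fin (n + 1 - 1), ilr z i =
      (∑ k ∈ Finset.range ((i:ℕ)+1), C k - ((i:ℕ)+1 : ℕ) * C ((i:ℕ)+1)) /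
        Real.sqrt ((((i:ℕ)+1 : ℕ) : ℝ) * ((((i:ℕ)+1 : ℕ) : ℝ) + 1)) := by
    intro z C hC i
    have hi : (i : ℕ) + 1 < n + 1 := by have := i.2; omega
    rw [← sum_w (n+1) ((i:ℕ)+1) (by omega) hi C]
    unfold ilr aInner
    refine Finset.sum_congr rfl fun k _ => ?_
    rw [clr_e _ _ (by omega) hi, hC]
  have hh := helmert A B n
  rw [hA0, zero_mul, zero_div, sub_zero, ← Fin.sum_univ_eq_sum_range, ← Fin.sum_univ_eq_sum_range (fun k => A k * B k)] at hh
  have hin : aInner x y = ∑ k : Fin (n+1), A k * B k :=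
    Finset.sum_congr rfl fun k _ => by rw [hA, hB]
  rw [hin, ← hh]
  exact Finset.sum_congr rfl fun i _ => by rw [hilr x A hA, hilr y B hB]
end
end

section
/- Invertibility of generalized accumulation: for D ≥ 2, let B be an invertible real n×n matrix and x_1, …, x_n ∈ S^D. Define the generalized accumulation (B ⊗ X)_i := ⊕_{j=1}^{n} (β_{ij} ⊗ x_j). Then applying the generalized accumulation of B⁻¹ to the sequence (B ⊗ X)_1, …, (B ⊗ X)_n recovers the original data: (B⁻¹ ⊗ (B ⊗ X))_i = x_i for every i. -/
open Finset

noncomputable section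

/-- Repeated perturbation of a list of compositions (with the uniform
    composition, the neutral element, as the empty value). -/
def bigPert {D : ℕ} (l : List (Fin D → ℝ)) : Fin D → ℝ :=
  l.foldr pert (unif D)

/-- Generalized accumulation: `(B ⊗ X)_i := ⊕_{j=1}^{n} (β_{ij} ⊗ x_j)`. -/
def genAcc {n D : ℕ} (B : Fin n → Fin n → ℝ) (x : Fin n → Fin D → ℝ) :
    Fin n → Fin D → ℝ :=
  fun i => bigPert (List.ofFn fun j => apow (B i j) (x j))

lemma clo_simplex {D : ℕ} (hD : 2 ≤ D) {z : Fin D → ℝ} (hz : ∀ i, 0 < z i) :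
    inSimplex (clo z) := by
  have : Nonempty (Fin D) := ⟨⟨0, by omega⟩⟩
  have hs : 0 < ∑ j, z j := Finset.sum_pos (fun i _ => hz i) Finset.univ_nonempty
  refine ⟨fun i => div_pos (hz i) hs, ?_⟩
  unfold clo
  rw [← Finset.sum_div, div_self hs.ne']

/-- Log-ratio coordinate. -/
def lrat {D : ℕ} (x : Fin D → ℝ) (k l : Fin D) : ℝ := Real.log (x k) - Real.log (x l)

lemma lrat_clo {D : ℕ} {z : Fin D → ℝ} (hz : ∀ i, 0 < z i) (k l : Fin D) :
    lrat (clo z) k l = lrat z k l := by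
  have hs : 0 < ∑ j, z j := Finset.sum_pos (fun i _ => hz i) ⟨k, Finset.mem_univ k⟩
  unfold lrat clo
  rw [Real.log_div (hz k).ne' hs.ne', Real.log_div (hz l).ne' hs.ne']
  ring

lemma lrat_pert {D : ℕ} {x y : Fin D → ℝ} (hx : ∀ i, 0 < x i) (hy : ∀ i, 0 < y i)
    (k l : Fin D) : lrat (pert x y) k l = lrat x k l + lrat y k l := by
  unfold pert
  rw [lrat_clo (fun i => mul_pos (hx i) (hy i))]
  unfold lrat
  rw [Real.log_mul (hx k).ne' (hy k).ne', Real.log_mul (hx l).ne' (hy l).ne']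
  ring

lemma lrat_apow {D : ℕ} {x : Fin D → ℝ} (hx : ∀ i, 0 < x i) (a : ℝ)
    (k l : Fin D) : lrat (apow a x) k l = a * lrat x k l := by
  unfold apow
  rw [lrat_clo (fun i => Real.rpow_pos_of_pos (hx i) a)]
  unfold lrat
  rw [Real.log_rpow (hx k), Real.log_rpow (hx l)]
  ring

lemma bigPert_spec {D : ℕ} (hD : 2 ≤ D) (L : List (Fin D → ℝ))
    (hL : ∀ x ∈ L, inSimplex x) :
    inSimplex (bigPert L) ∧
      ∀ k l, lrat (bigPert L) k l = (L.map fun x => lrat x k l).sum := by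
  induction L with
  | nil =>
    have hD' : (0 : ℝ) < D := by exact_mod_cast (by omega : 0 < D)
    refine ⟨⟨fun i => ?_, ?_⟩, fun k l => ?_⟩
    · simp [bigPert, unif, hD']
    · simp [bigPert, unif, hD'.ne']
    · simp [bigPert, unif, lrat]
  | cons a L ih =>
    obtain ⟨h1, h2⟩ := ih (fun x hx => hL x (List.mem_cons_of_mem _ hx))
    have ha := hL a List.mem_cons_self
    have e : bigPert (a :: L) = pert a (bigPert L) := rfl
    rw [e]
    refine ⟨clo_simplex hD (fun i => mul_pos (ha.1 i) (h1.1 i)), fun k l => ?_⟩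
    rw [lrat_pert ha.1 h1.1, h2]
    simp

lemma genAcc_spec {n D : ℕ} (hD : 2 ≤ D) (B : Fin n → Fin n → ℝ) (x : Fin n → Fin D → ℝ)
    (hx : ∀ j, inSimplex (x j)) (i : Fin n) :
    inSimplex (genAcc B x i) ∧
      ∀ k l, lrat (genAcc B x i) k l = ∑ j, B i j * lrat (x j) k l := by
  have h := bigPert_spec hD (List.ofFn fun j => apow (B i j) (x j)) (by
    intro y hy
    obtain ⟨j, rfl⟩ := (List.mem_ofFn' _ _).1 hy
    exact clo_simplex hD (fun k => Real.rpow_pos_of_pos ((hx j).1 k) _))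
  refine ⟨h.1, fun k l => ?_⟩
  have h2 := h.2 k l
  rw [List.map_ofFn, List.sum_ofFn] at h2
  refine h2.trans (Finset.sum_congr rfl fun j _ => ?_)
  exact lrat_apow (hx j).1 _ k l

lemma eq_of_lrat {D : ℕ} {x y : Fin D → ℝ} (hx : inSimplex x) (hy : inSimplex y)
    (h : ∀ k l, lrat x k l = lrat y k l) : x = y := by
  funext k
  have key : ∀ l, x k * y l = y k * x l := by
    intro l
    have h1 := h k l
    unfold lrat at h1
    apply Real.log_injOn_pos (mul_pos (hx.1 k) (hy.1 l)) (mul_pos (hy.1 k) (hx.1 l))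
    rw [Real.log_mul (hx.1 k).ne' (hy.1 l).ne', Real.log_mul (hy.1 k).ne' (hx.1 l).ne']
    linarith
  have h2 := Finset.sum_congr (rfl : (Finset.univ : Finset (Fin D)) = _) (fun l _ => key l)
  rw [← Finset.mul_sum, ← Finset.mul_sum, hx.2, hy.2] at h2
  simpa using h2

/-- invertibility of generalized accumulation: applying the
    generalized accumulation of B⁻¹ to B ⊗ X recovers the original data. -/
theorem genAcc_inverse (n D : ℕ) (hD : 2 ≤ D) (B : Matrix (Fin n) (Fin n) ℝ)
    (hB : IsUnit B.det) (x : Fin n → Fin D → ℝ)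
    (hx : ∀ j, inSimplex (x j)) (i : Fin n) :
    genAcc (fun a b => B⁻¹ a b) (genAcc (fun a b => B a b) x) i = x i := by
  have h1 := genAcc_spec hD (fun a b => B a b) x hx
  have h2 := genAcc_spec hD (fun a b => B⁻¹ a b) _ (fun j => (h1 j).1) i
  refine eq_of_lrat h2.1 (hx i) fun k l => ?_
  rw [h2.2]
  have e : (fun j => lrat (genAcc (fun a b => B a b) x j) k l)
      = B.mulVec (fun j => lrat (x j) k l) := by
    funext j
    exact (h1 j).2 k l
  change (B⁻¹.mulVec (fun j => lrat (genAcc (fun a b => B a b) x j) k l)) i = _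
  rw [e, Matrix.mulVec_mulVec, Matrix.nonsing_inv_mul _ hB, Matrix.one_mulVec]
end
end
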